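/- arXiv:2105.02122 — 3 statements merged into one kernel-verified Lean document; each statement's English description precedes it below -/
import Mathlib

section
/- Let α ∈ (0,1) and λ > 0. Then the function t ↦ E_α(−λ t^α) is positive and decreasing on [0, ∞), and satisfies E_α(−λ t^α) ≤ 1 for all t ≥ 0; that is, for all 0 ≤ s ≤ t one has 0 < E_α(−λ t^α) ≤ E_α(−λ s^α) ≤ 1. -/
/-- The Mittag-Leffler function `E_α(x) = ∑_{k=0}^∞ x^k / Γ(αk + 1)`. -/
noncomputable def mittagLeffler (α x : ℝ) : ℝ :=
  ∑' k : ℕ, x ^ k / Real.Gamma (α * k + 1)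

/-!
`E_α` is a limit of moment generating functions of probability measures on `[0, ∞)`. Dividing
Euler's products for `k! = Γ(k + 1)` and `Γ(αk + 1)` gives
`k! / Γ(αk + 1) = lim_n n ^ ((1 - α) k) ∏_{j ≤ n} (αk + 1 + j) / (k + 1 + j)`.
For fixed `n` the right-hand side is a moment sequence in `k`: moment sequences are closed under
products, and `(αk + c) / (k + c) = α + (1 - α) c / (k + c)` is the `k`-th moment of a mixture of
the point mass at `1` and the law of `V ^ (1 / c)`, `V` uniform on `[0, 1]`. Log-convexity of `Γ`
bounds the `n`-th sequence by its limit, so the generating functions converge to `E_α`.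
Each of them is increasing and, by Jensen's inequality, at least `exp (m x)`, where `m` is the mean.
-/

open MeasureTheory Set Filter Topology Finset Real
open scoped Nat

/-- The sequence `a` is the sequence of moments of a compactly supported probability measure on
`[0, ∞)`. -/
def IsMomentSeq (a : ℕ → ℝ) : Prop :=
  ∃ μ : Measure ℝ, IsProbabilityMeasure μ ∧ (∃ R, ∀ᵐ u ∂μ, u ∈ Set.Icc 0 R) ∧
    ∀ k, ∫ u, u ^ k ∂μ = a k

theorem integrable_of_continuous_of_ae_mem_Icc {μ : Measure ℝ} [IsFiniteMeasure μ] {a b : ℝ}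
    (hμ : ∀ᵐ u ∂μ, u ∈ Set.Icc a b) {f : ℝ → ℝ} (hf : Continuous f) : Integrable f μ := by
  obtain ⟨C, hC⟩ := isCompact_Icc.exists_bound_of_continuousOn (s := Set.Icc a b) hf.continuousOn
  exact Integrable.of_bound hf.aestronglyMeasurable C (hμ.mono hC)

theorem hasSum_moment_div_factorial_mul_pow {μ : Measure ℝ} [IsFiniteMeasure μ] {a b : ℝ}
    (hμ : ∀ᵐ u ∂μ, u ∈ Set.Icc a b) (x : ℝ) :
    HasSum (fun k : ℕ ↦ (∫ u, u ^ k ∂μ) / k ! * x ^ k) (∫ u, exp (x * u) ∂μ) := by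
  have hterm (k : ℕ) : ∫ u, (x * u) ^ k / k ! ∂μ = (∫ u, u ^ k ∂μ) / k ! * x ^ k := by
    simp_rw [mul_pow, mul_div_assoc]
    rw [integral_const_mul, integral_div, mul_comm]
  simp_rw [← hterm]
  refine hasSum_integral_of_dominated_convergence (fun k _ ↦ (|x| * max |a| |b|) ^ k / k !)
    (fun k ↦ by fun_prop) (fun k ↦ ?_) ?_ (integrable_const _) ?_
  · filter_upwards [hμ] with u hu
    have hmax : |u| ≤ max |a| |b| := abs_le_max_abs_abs hu.1 hu.2
    rw [norm_div, norm_pow, norm_mul, Real.norm_natCast, Real.norm_eq_abs, Real.norm_eq_abs]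
    gcongr
  · exact ae_of_all _ fun _ ↦ Real.summable_pow_div_factorial _
  · refine ae_of_all _ fun u ↦ ?_
    rw [Real.exp_eq_exp_ℝ]
    exact NormedSpace.expSeries_div_hasSum_exp _

namespace IsMomentSeq

variable {a b : ℕ → ℝ}

theorem pow {c : ℝ} (hc : 0 ≤ c) : IsMomentSeq (fun k ↦ c ^ k) :=
  ⟨Measure.dirac c, inferInstance, ⟨c, by simp [ae_dirac_eq, hc]⟩, fun k ↦ by simp⟩

theorem one : IsMomentSeq (fun _ ↦ 1) := by
  simpa using pow zero_le_one

theorem mul (ha : IsMomentSeq a) (hb : IsMomentSeq b) : IsMomentSeq (fun k ↦ a k * b k) := by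
  obtain ⟨μ, _, ⟨R, hμ⟩, ha⟩ := ha
  obtain ⟨ν, _, ⟨S, hν⟩, hb⟩ := hb
  refine ⟨(μ.prod ν).map (fun p ↦ p.1 * p.2), Measure.isProbabilityMeasure_map (by fun_prop),
    ⟨R * S, ?_⟩, fun k ↦ ?_⟩
  · refine (ae_map_iff (by fun_prop) measurableSet_Icc).2 ?_
    filter_upwards [Measure.quasiMeasurePreserving_fst.ae hμ,
      Measure.quasiMeasurePreserving_snd.ae hν] with p hp hq
    exact ⟨mul_nonneg hp.1 hq.1, mul_le_mul hp.2 hq.2 hq.1 (hp.1.trans hp.2)⟩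
  · rw [integral_map (by fun_prop) (by fun_prop)]
    simp_rw [mul_pow]
    rw [integral_prod_mul (fun u : ℝ ↦ u ^ k) (fun v : ℝ ↦ v ^ k), ha, hb]

theorem prod {ι : Type*} (s : Finset ι) {a : ι → ℕ → ℝ} (ha : ∀ i ∈ s, IsMomentSeq (a i)) :
    IsMomentSeq (fun k ↦ ∏ i ∈ s, a i k) := by
  induction s using Finset.cons_induction with
  | empty => simpa using one
  | cons i s hi ih =>
    simp_rw [prod_cons]
    exact (ha i (mem_cons_self i s)).mul (ih fun j hj ↦ ha j (mem_cons_of_mem hj))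

theorem convexComb (ha : IsMomentSeq a) (hb : IsMomentSeq b) {s t : ℝ} (hs : 0 ≤ s) (ht : 0 ≤ t)
    (hst : s + t = 1) : IsMomentSeq (fun k ↦ s * a k + t * b k) := by
  obtain ⟨μ, _, ⟨R, hμ⟩, ha⟩ := ha
  obtain ⟨ν, _, ⟨S, hν⟩, hb⟩ := hb
  refine ⟨ENNReal.ofReal s • μ + ENNReal.ofReal t • ν, ⟨?_⟩, ⟨max R S, ?_⟩, fun k ↦ ?_⟩
  · simp [← ENNReal.ofReal_add hs ht, hst]
  · rw [ae_add_measure_iff]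
    exact ⟨Measure.ae_smul_measure (hμ.mono fun _ hu ↦ ⟨hu.1, hu.2.trans (le_max_left _ _)⟩) _,
      Measure.ae_smul_measure (hν.mono fun _ hu ↦ ⟨hu.1, hu.2.trans (le_max_right _ _)⟩) _⟩
  · have hμk := integrable_of_continuous_of_ae_mem_Icc hμ (continuous_pow k)
    have hνk := integrable_of_continuous_of_ae_mem_Icc hν (continuous_pow k)
    rw [integral_add_measure (hμk.smul_measure ENNReal.ofReal_ne_top)
      (hνk.smul_measure ENNReal.ofReal_ne_top), integral_smul_measure, integral_smul_measure,
      ENNReal.toReal_ofReal hs, ENNReal.toReal_ofReal ht, ha, hb, smul_eq_mul, smul_eq_mul]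

theorem div_natCast_add {c : ℝ} (hc : 0 < c) : IsMomentSeq (fun k ↦ c / (k + c)) := by
  have hmeas : Measurable fun v : ℝ ↦ v ^ (1 / c) := by fun_prop
  have : IsProbabilityMeasure (volume.restrict (Set.Ioc (0 : ℝ) 1)) := ⟨by simp⟩
  refine ⟨(volume.restrict (Set.Ioc (0 : ℝ) 1)).map fun v ↦ v ^ (1 / c),
    Measure.isProbabilityMeasure_map hmeas.aemeasurable, ⟨1, ?_⟩, fun k ↦ ?_⟩
  · refine (ae_map_iff hmeas.aemeasurable measurableSet_Icc).2 <|
      ae_restrict_of_forall_mem measurableSet_Ioc fun v hv ↦ ?_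
    exact ⟨rpow_nonneg hv.1.le _, rpow_le_one hv.1.le hv.2 (by positivity)⟩
  · have hexp : 0 < 1 / c * k + 1 := by positivity
    rw [integral_map hmeas.aemeasurable (by fun_prop)]
    calc ∫ v in Set.Ioc (0 : ℝ) 1, (v ^ (1 / c)) ^ k
      _ = ∫ v in Set.Ioc (0 : ℝ) 1, v ^ (1 / c * k) :=
        setIntegral_congr_fun measurableSet_Ioc fun v hv ↦ (rpow_mul_natCast hv.1.le _ _).symm
      _ = ∫ v in (0 : ℝ)..1, v ^ (1 / c * k) :=
        (intervalIntegral.integral_of_le zero_le_one).symm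
      _ = c / (k + c) := by
        rw [integral_rpow (.inl (by linarith)), one_rpow, zero_rpow hexp.ne']
        field_simp
        ring

theorem add_div_natCast_add {α c : ℝ} (hα₀ : 0 ≤ α) (hα₁ : α ≤ 1) (hc : 0 < c) :
    IsMomentSeq (fun k ↦ (α * k + c) / (k + c)) := by
  have hmix := one.convexComb (div_natCast_add hc) hα₀ (sub_nonneg.2 hα₁) (add_sub_cancel α 1)
  convert! hmix using 2 with k
  have : (k : ℝ) + c ≠ 0 := by positivity
  field_simp
  ring

theorem exp_le_tsum (ha : IsMomentSeq a) (x : ℝ) : exp (a 1 * x) ≤ ∑' k, a k / k ! * x ^ k := by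
  obtain ⟨μ, _, ⟨R, hμ⟩, ha⟩ := ha
  simp_rw [← ha, (hasSum_moment_div_factorial_mul_pow hμ x).tsum_eq, pow_one]
  calc exp ((∫ u, u ∂μ) * x)
    _ = exp (∫ u, x * u ∂μ) := by rw [integral_const_mul, mul_comm]
    _ ≤ ∫ u, exp (x * u) ∂μ :=
      convexOn_exp.map_integral_le continuous_exp.continuousOn isClosed_univ (by simp)
        (integrable_of_continuous_of_ae_mem_Icc hμ (by fun_prop))
        (integrable_of_continuous_of_ae_mem_Icc hμ (by fun_prop))

theorem monotone_tsum (ha : IsMomentSeq a) : Monotone fun x ↦ ∑' k, a k / k ! * x ^ k := by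
  obtain ⟨μ, _, ⟨R, hμ⟩, ha⟩ := ha
  simp_rw [← ha, (hasSum_moment_div_factorial_mul_pow hμ _).tsum_eq]
  intro x y hxy
  refine integral_mono_ae (integrable_of_continuous_of_ae_mem_Icc hμ (by fun_prop))
    (integrable_of_continuous_of_ae_mem_Icc hμ (by fun_prop)) ?_
  filter_upwards [hμ] with u hu
  exact exp_le_exp.2 (mul_le_mul_of_nonneg_right hxy hu.1)

end IsMomentSeq

theorem rpow_mul_Gamma_add_one_le {y s : ℝ} (hy : 0 < y) (hs : 0 ≤ s) :
    y ^ s * Gamma (y + 1) ≤ Gamma (y + 1 + s) := by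
  obtain rfl | hs := hs.eq_or_lt
  · simp
  have hΓ := Gamma_pos_of_pos hy
  have hΓ₁ : 0 < Gamma (y + 1) := Gamma_pos_of_pos (by positivity)
  have hΓs : 0 < Gamma (y + 1 + s) := Gamma_pos_of_pos (by positivity)
  have hconvex : Gamma (y + 1) ≤ Gamma y ^ (s / (1 + s)) * Gamma (y + 1 + s) ^ (1 / (1 + s)) := by
    convert! Gamma_mul_add_mul_le_rpow_Gamma_mul_rpow_Gamma hy (by positivity : 0 < y + 1 + s)
      (by positivity : 0 < s / (1 + s)) (by positivity : 0 < 1 / (1 + s)) (by field_simp; ring)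
      using 2
    field_simp
    ring
  refine le_of_mul_le_mul_left ?_ (rpow_pos_of_pos hΓ s)
  calc Gamma y ^ s * (y ^ s * Gamma (y + 1))
    _ = Gamma (y + 1) ^ (1 + s) := by
      rw [rpow_add hΓ₁, rpow_one, Gamma_add_one hy.ne', mul_rpow hy.le hΓ.le]
      ring
    _ ≤ (Gamma y ^ (s / (1 + s)) * Gamma (y + 1 + s) ^ (1 / (1 + s))) ^ (1 + s) := by gcongr
    _ = Gamma y ^ s * Gamma (y + 1 + s) := by
      rw [mul_rpow (by positivity) (by positivity), ← rpow_mul hΓ.le, ← rpow_mul hΓs.le,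
        div_mul_cancel₀ _ (by positivity), div_mul_cancel₀ _ (by positivity), rpow_one]

theorem Gamma_add_natCast {s : ℝ} (hs : 0 < s) (n : ℕ) :
    Gamma (s + n) = Gamma s * ∏ j ∈ range n, (s + j) := by
  induction n with
  | zero => simp
  | succ n ih =>
    rw [Nat.cast_add_one, ← add_assoc, Gamma_add_one (by positivity), ih, prod_range_succ]
    ring

theorem GammaSeq_eq_mul_Gamma_div_Gamma {s : ℝ} (hs : 0 < s) (n : ℕ) :
    GammaSeq s n = n ^ s * n ! * Gamma s / Gamma (s + (n + 1)) := by
  have hΓ := (Gamma_pos_of_pos hs).ne'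
  rw [← Nat.cast_add_one, Gamma_add_natCast hs, GammaSeq, mul_comm (Gamma s) (∏ j ∈ _, _),
    mul_div_mul_right _ _ hΓ]

theorem summable_pow_div_Gamma {α : ℝ} (hα : 0 < α) (x : ℝ) :
    Summable fun k : ℕ ↦ x ^ k / Gamma (α * k + 1) := by
  obtain rfl | hx := eq_or_ne x 0
  · exact summable_of_ne_finset_zero (s := {0}) fun k hk ↦ by simp_all
  have hΓ (k : ℕ) : 0 < Gamma (α * k + 1) := Gamma_pos_of_pos (by positivity)
  have hlin : Tendsto (fun k : ℕ ↦ α * (k : ℝ)) atTop atTop :=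
    tendsto_natCast_atTop_atTop.const_mul_atTop hα
  have hbound : Tendsto (fun k : ℕ ↦ |x| * (α * (k : ℝ)) ^ (-α)) atTop (𝓝 0) := by
    simpa using ((tendsto_rpow_neg_atTop hα).comp hlin).const_mul |x|
  refine summable_of_ratio_test_tendsto_lt_one zero_lt_one
    (.of_forall fun k ↦ div_ne_zero (pow_ne_zero k hx) (hΓ k).ne')
    (squeeze_zero' (.of_forall fun k ↦ by positivity) ?_ hbound)
  filter_upwards [eventually_gt_atTop 0] with k hk
  have hαk : 0 < α * k := by positivity
  have hratio : Gamma (α * k + 1) / Gamma (α * (k + 1 : ℕ) + 1) ≤ (α * k) ^ (-α) := by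
    rw [div_le_iff₀ (hΓ _), rpow_neg hαk.le, le_inv_mul_iff₀ (by positivity)]
    convert! rpow_mul_Gamma_add_one_le hαk hα.le using 2
    push_cast
    ring
  calc ‖x ^ (k + 1) / Gamma (α * (k + 1 : ℕ) + 1)‖ / ‖x ^ k / Gamma (α * k + 1)‖
    _ = |x| * (Gamma (α * k + 1) / Gamma (α * (k + 1 : ℕ) + 1)) := by
      simp only [norm_div, norm_pow, Real.norm_eq_abs, abs_of_pos (hΓ _)]
      have := abs_pos.2 hx
      have := hΓ k
      rw [pow_succ]
      field_simp
    _ ≤ |x| * (α * k) ^ (-α) := by gcongr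

theorem mittagLeffler_zero (α : ℝ) : mittagLeffler α 0 = 1 := by
  rw [mittagLeffler, tsum_eq_single 0 fun k hk ↦ by simp [hk]]
  simp

/-- The `n`-th Euler approximation to `k! / Γ(αk + 1)`, the `k`-th moment of the Mittag-Leffler
distribution. For `n = 0` this is the junk value `0 / 0`. -/
noncomputable def eulerMoment (α : ℝ) (n k : ℕ) : ℝ :=
  GammaSeq (k + 1) n / GammaSeq (α * k + 1) n

section EulerMoment

variable {α : ℝ} {n : ℕ}

theorem eulerMoment_eq_pow_mul_prod (α : ℝ) (hn : n ≠ 0) (k : ℕ) :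
    eulerMoment α n k =
      ((n : ℝ) ^ (1 - α)) ^ k * ∏ j ∈ range (n + 1), (α * k + (1 + j)) / (k + (1 + j)) := by
  have hn' : (0 : ℝ) < n := by positivity
  have hpow : (n : ℝ) ^ ((k : ℝ) + 1) = ((n : ℝ) ^ (1 - α)) ^ k * (n : ℝ) ^ (α * k + 1) := by
    rw [← rpow_mul_natCast hn'.le, ← rpow_add hn']
    ring_nf
  simp only [eulerMoment, GammaSeq, hpow, prod_div_distrib, add_assoc]
  field_simp

theorem isMomentSeq_eulerMoment (hα₀ : 0 ≤ α) (hα₁ : α ≤ 1) (hn : n ≠ 0) :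
    IsMomentSeq (eulerMoment α n) := by
  rw [funext (eulerMoment_eq_pow_mul_prod α hn)]
  exact (IsMomentSeq.pow (by positivity)).mul
    (.prod _ fun j _ ↦ .add_div_natCast_add hα₀ hα₁ (by positivity))

theorem tendsto_eulerMoment (hα : 0 ≤ α) (k : ℕ) :
    Tendsto (fun n ↦ eulerMoment α n k) atTop (𝓝 (k ! / Gamma (α * k + 1))) := by
  rw [← Gamma_nat_eq_factorial]
  exact (GammaSeq_tendsto_Gamma _).div (GammaSeq_tendsto_Gamma _)
    (Gamma_pos_of_pos (by positivity)).ne'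

theorem eulerMoment_le (hα₀ : 0 ≤ α) (hα₁ : α ≤ 1) (hn : n ≠ 0) (k : ℕ) :
    eulerMoment α n k ≤ k ! / Gamma (α * k + 1) := by
  have hn' : (0 : ℝ) < n := by positivity
  have : 0 < Gamma (α * k + 1) := Gamma_pos_of_pos (by positivity)
  have : 0 < Gamma (α * k + 1 + (n + 1)) := Gamma_pos_of_pos (by positivity)
  have hΓk : 0 < Gamma ((k : ℝ) + 1 + (n + 1)) := Gamma_pos_of_pos (by positivity)
  have hs : 0 ≤ (1 - α) * k := mul_nonneg (sub_nonneg.2 hα₁) k.cast_nonneg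
  have hgrowth : (n : ℝ) ^ ((1 - α) * k) * Gamma (α * k + 1 + (n + 1)) ≤
      Gamma (k + 1 + (n + 1)) := by
    calc (n : ℝ) ^ ((1 - α) * k) * Gamma (α * k + 1 + (n + 1))
      _ ≤ (α * k + 1 + n) ^ ((1 - α) * k) * Gamma (α * k + 1 + n + 1) := by
        rw [← add_assoc]
        gcongr
        · linarith [mul_nonneg hα₀ (k.cast_nonneg (α := ℝ))]
      _ ≤ Gamma (α * k + 1 + n + 1 + (1 - α) * k) :=
        rpow_mul_Gamma_add_one_le (by positivity) hs
      _ = Gamma (k + 1 + (n + 1)) := by ring_nf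
  have hpow : (n : ℝ) ^ ((k : ℝ) + 1) = n ^ ((1 - α) * k) * n ^ (α * k + 1) := by
    rw [← rpow_add hn']
    ring_nf
  calc eulerMoment α n k
    _ = k ! / Gamma (α * k + 1) *
        (n ^ ((1 - α) * k) * Gamma (α * k + 1 + (n + 1)) / Gamma (k + 1 + (n + 1))) := by
      rw [eulerMoment, GammaSeq_eq_mul_Gamma_div_Gamma (by positivity),
        GammaSeq_eq_mul_Gamma_div_Gamma (by positivity), hpow, Gamma_nat_eq_factorial]
      field_simp
    _ ≤ k ! / Gamma (α * k + 1) :=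
      mul_le_of_le_one_right (by positivity) (div_le_one_of_le₀ hgrowth hΓk.le)

theorem tendsto_tsum_eulerMoment (hα₀ : 0 < α) (hα₁ : α ≤ 1) (x : ℝ) :
    Tendsto (fun n ↦ ∑' k, eulerMoment α n k / k ! * x ^ k) atTop (𝓝 (mittagLeffler α x)) := by
  refine tendsto_tsum_of_dominated_convergence (summable_pow_div_Gamma hα₀ |x|) (fun k ↦ ?_) ?_
  · convert! ((tendsto_eulerMoment hα₀.le k).div_const (k ! : ℝ)).mul_const (x ^ k) using 2
    field_simp
  · filter_upwards [eventually_ne_atTop 0] with n hn k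
    have hnonneg : 0 ≤ eulerMoment α n k := by
      rw [eulerMoment_eq_pow_mul_prod α hn]
      positivity
    calc ‖eulerMoment α n k / k ! * x ^ k‖
      _ = eulerMoment α n k / k ! * |x| ^ k := by
        rw [norm_mul, norm_pow, Real.norm_of_nonneg (by positivity), Real.norm_eq_abs]
      _ ≤ k ! / Gamma (α * k + 1) / k ! * |x| ^ k := by
        gcongr
        exact eulerMoment_le hα₀.le hα₁ hn k
      _ = |x| ^ k / Gamma (α * k + 1) := by field_simp

end EulerMoment

theorem exp_div_Gamma_le_mittagLeffler {α : ℝ} (hα₀ : 0 < α) (hα₁ : α ≤ 1) (x : ℝ) :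
    exp (x / Gamma (α + 1)) ≤ mittagLeffler α x := by
  have hmean : Tendsto (fun n ↦ exp (eulerMoment α n 1 * x)) atTop
      (𝓝 (exp (x / Gamma (α + 1)))) := by
    convert! ((tendsto_eulerMoment hα₀.le 1).mul_const x).rexp using 3
    simp [div_eq_inv_mul]
  refine le_of_tendsto_of_tendsto hmean (tendsto_tsum_eulerMoment hα₀ hα₁ x) ?_
  filter_upwards [eventually_ne_atTop 0] with n hn
  exact (isMomentSeq_eulerMoment hα₀.le hα₁ hn).exp_le_tsum x

theorem monotone_mittagLeffler {α : ℝ} (hα₀ : 0 < α) (hα₁ : α ≤ 1) :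
    Monotone (mittagLeffler α) := by
  intro x y hxy
  refine le_of_tendsto_of_tendsto (tendsto_tsum_eulerMoment hα₀ hα₁ x)
    (tendsto_tsum_eulerMoment hα₀ hα₁ y) ?_
  filter_upwards [eventually_ne_atTop 0] with n hn
  exact (isMomentSeq_eulerMoment hα₀.le hα₁ hn).monotone_tsum hxy

theorem mittagLeffler_pos_decreasing_le_one (α lam : ℝ) (hα : α ∈ Set.Ioo (0:ℝ) 1)
    (hlam : 0 < lam) :
    ∀ s t : ℝ, 0 ≤ s → s ≤ t →
      0 < mittagLeffler α (-lam * t ^ α) ∧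
      mittagLeffler α (-lam * t ^ α) ≤ mittagLeffler α (-lam * s ^ α) ∧
      mittagLeffler α (-lam * s ^ α) ≤ 1 := by
  intro s t hs hst
  have hmono := monotone_mittagLeffler hα.1 hα.2.le
  have harg_le : -lam * t ^ α ≤ -lam * s ^ α :=
    mul_le_mul_of_nonpos_left (rpow_le_rpow hs hst hα.1.le) (neg_nonpos.2 hlam.le)
  have harg_nonpos : -lam * s ^ α ≤ 0 :=
    mul_nonpos_of_nonpos_of_nonneg (neg_nonpos.2 hlam.le) (rpow_nonneg hs α)
  exact ⟨(exp_pos _).trans_le (exp_div_Gamma_le_mittagLeffler hα.1 hα.2.le _), hmono harg_le,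
    (hmono harg_nonpos).trans_eq (mittagLeffler_zero α)⟩
end

section
/- Let α ∈ (0,1). There exists a constant C > 0 (depending only on α) such that for every λ > 0 and every t > 0, λ E_α(−λ t^α) ≤ C t^(−α). -/
/-!
The function `u(t) = E_α(-t^α)` solves the Volterra equation `u + k ⋆ u = 1`, where
`k(x) = x^(α-1) / Γ(α)`. For `α ≤ 1` this kernel is decreasing and log-convex, and for such kernels
a solution of `u + k ⋆ u = g` with `u(0) > 0` and `g / k` increasing stays positive: at a first
zero `T`, compare the equation at `T` with the equation at a maximum point of `u` on a short
interval `[T - δ, T]`. This applies to `u` itself and then to the differences `u - u(· + h)`, so `u`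
is positive and decreasing. Replacing `u(s)` by `u(t)` under the integral gives
`u(t) (1 + ∫₀ᵗ k) ≤ 1`, that is, `E_α(-x) ≤ 1 / (1 + x / Γ(α + 1))`.
-/

open MeasureTheory Set Filter Topology

/-- A log-convex decreasing convolution kernel on `(0, ∞)`, possibly singular at `0`. Log-convexity
is encoded as monotonicity in `x` of the ratios `k (x + a) / k x`, with denominators cleared. -/
structure IsLogConvexKernel (k : ℝ → ℝ) : Prop where
  pos : ∀ {x}, 0 < x → 0 < k x
  antitoneOn : AntitoneOn k (Ioi 0)
  intervalIntegrable : ∀ {x}, 0 ≤ x → IntervalIntegrable k volume 0 x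
  mul_add_le : ∀ {x y a}, 0 < x → x ≤ y → 0 ≤ a → k (x + a) * k y ≤ k x * k (y + a)

/-- `u` is a continuous solution on `[0, ∞)` of the Volterra equation of the second kind
`u + k ⋆ u = g`. -/
structure IsVolterraSolution (k g u : ℝ → ℝ) : Prop where
  continuousOn : ContinuousOn u (Ici 0)
  eq_sub_integral : ∀ {t}, 0 ≤ t → u t = g t - ∫ s in (0 : ℝ)..t, k (t - s) * u s

theorem pos_of_continuousOn_of_step {u : ℝ → ℝ} (hu : ContinuousOn u (Ici 0))
    (step : ∀ T, 0 ≤ T → (∀ t ∈ Ico 0 T, 0 < u t) → 0 < u T) {t : ℝ} (ht : 0 ≤ t) : 0 < u t := by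
  by_contra! hut
  set S : Set ℝ := Ici 0 ∩ u ⁻¹' Iic 0
  have hS : BddBelow S := ⟨0, fun s hs => hs.1⟩
  have hT : sInf S ∈ S := (hu.preimage_isClosed_of_isClosed isClosed_Ici isClosed_Iic).csInf_mem
    ⟨t, ht, hut⟩ hS
  exact hT.2.not_gt <| step _ hT.1 fun s hs =>
    not_le.1 fun hus => hs.2.not_ge (csInf_le hS ⟨hs.1, hus⟩)

namespace IsLogConvexKernel

variable {k u : ℝ → ℝ} {a b t T : ℝ}

theorem intervalIntegrable_comp_sub_left (hk : IsLogConvexKernel k) (ha : a ≤ T) (hb : b ≤ T) :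
    IntervalIntegrable (fun s => k (T - s)) volume a b := by
  simpa using ((hk.intervalIntegrable (sub_nonneg.2 ha)).symm.trans
    (hk.intervalIntegrable (sub_nonneg.2 hb))).comp_sub_left T

theorem intervalIntegrable_mul (hk : IsLogConvexKernel k) (hu : ContinuousOn u (Ici 0))
    (ha : a ∈ Icc 0 T) (hb : b ∈ Icc 0 T) :
    IntervalIntegrable (fun s => k (T - s) * u s) volume a b :=
  (hk.intervalIntegrable_comp_sub_left ha.2 hb.2).mul_continuousOn <|
    hu.mono fun _ hs => (le_inf ha.1 hb.1).trans hs.1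

theorem mul_integral_comp_sub_le (hk : IsLogConvexKernel k) (hu : ContinuousOn u (Ici 0))
    (ht : 0 ≤ t) (htT : t ≤ T) (hpos : ∀ s ∈ Ioo 0 t, 0 ≤ u s) :
    k t * ∫ s in (0 : ℝ)..t, k (T - s) * u s ≤ k T * ∫ s in (0 : ℝ)..t, k (t - s) * u s := by
  simp only [← intervalIntegral.integral_const_mul]
  refine intervalIntegral.integral_mono_on_of_le_Ioo ht
    ((hk.intervalIntegrable_mul hu ⟨le_rfl, ht.trans htT⟩ ⟨ht, htT⟩).const_mul _)
    ((hk.intervalIntegrable_mul hu ⟨le_rfl, ht⟩ ⟨ht, le_rfl⟩).const_mul _) fun s hs => ?_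
  have hratio : k t * k (T - s) ≤ k T * k (t - s) := by
    simpa [mul_comm] using
      hk.mul_add_le (sub_pos.2 hs.2) (sub_le_sub_right htT s) hs.1.le
  simpa only [mul_assoc] using mul_le_mul_of_nonneg_right hratio (hpos s hs)

theorem integral_comp_sub_mul_le (hk : IsLogConvexKernel k) (hu : ContinuousOn u (Ici 0))
    (ht : 0 ≤ t) (htT : t ≤ T) {M : ℝ} (hM : ∀ s ∈ Ioo t T, u s ≤ M) :
    ∫ s in t..T, k (T - s) * u s ≤ (∫ x in (0 : ℝ)..T - t, k x) * M := by
  calc ∫ s in t..T, k (T - s) * u s ≤ ∫ s in t..T, k (T - s) * M :=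
        intervalIntegral.integral_mono_on_of_le_Ioo htT
          (hk.intervalIntegrable_mul hu ⟨ht, htT⟩ ⟨ht.trans htT, le_rfl⟩)
          ((hk.intervalIntegrable_comp_sub_left htT le_rfl).mul_const M) fun s hs =>
          mul_le_mul_of_nonneg_left (hM s hs) (hk.pos (sub_pos.2 hs.2)).le
    _ = (∫ x in (0 : ℝ)..T - t, k x) * M := by
        rw [intervalIntegral.integral_mul_const, intervalIntegral.integral_comp_sub_left, sub_self]

theorem le_integral_comp_sub_mul (hk : IsLogConvexKernel k) (hu : ContinuousOn u (Ici 0))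
    (ht : 0 ≤ t) {m : ℝ} (hm : ∀ s ∈ Ioo 0 t, m ≤ u s) :
    (∫ x in (0 : ℝ)..t, k x) * m ≤ ∫ s in (0 : ℝ)..t, k (t - s) * u s := by
  have h := hk.integral_comp_sub_mul_le hu.neg le_rfl ht (M := -m) fun s hs => neg_le_neg (hm s hs)
  simpa using h

theorem exists_forall_mul_integral_lt (hk : IsLogConvexKernel k) (hT : 0 < T) :
    ∃ δ ∈ Ioc 0 T, ∀ x ∈ Ioo 0 δ, k (T - x) * ∫ y in (0 : ℝ)..x, k y < k T := by
  have hprim : Tendsto (fun x => k (T / 2) * ∫ y in (0 : ℝ)..x, k y) (𝓝[>] 0) (𝓝 0) := by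
    have hcont : ContinuousOn (fun x => ∫ y in (0 : ℝ)..x, k y) (uIcc 0 T) :=
      intervalIntegral.continuousOn_primitive_interval' (hk.intervalIntegrable hT.le) left_mem_uIcc
    have hlim : Tendsto (fun x => ∫ y in (0 : ℝ)..x, k y) (𝓝[>] 0) (𝓝 0) := by
      simpa using (hcont 0 left_mem_uIcc).tendsto.mono_left
        (nhdsWithin_le_of_mem (uIcc_of_le hT.le ▸ Icc_mem_nhdsGT hT))
    simpa using hlim.const_mul (k (T / 2))
  have hev : ∀ᶠ x in 𝓝[>] 0, k (T - x) * ∫ y in (0 : ℝ)..x, k y < k T := by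
    filter_upwards [hprim.eventually_lt_const (hk.pos hT), Ioo_mem_nhdsGT (half_pos hT)]
      with x hlt hx
    have hint : 0 ≤ ∫ y in (0 : ℝ)..x, k y :=
      (intervalIntegral.intervalIntegral_pos_of_pos_on (hk.intervalIntegrable hx.1.le)
        (fun y hy => hk.pos hy.1) hx.1).le
    have hanti : k (T - x) ≤ k (T / 2) :=
      hk.antitoneOn (half_pos hT) (mem_Ioi.2 (by linarith [hx.2])) (by linarith [hx.2])
    exact (mul_le_mul_of_nonneg_right hanti hint).trans_lt hlt
  exact (mem_nhdsGT_iff_exists_mem_Ioc_Ioo_subset hT).1 hev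

end IsLogConvexKernel

namespace IsVolterraSolution

variable {k g u : ℝ → ℝ}

theorem apply_zero (hu : IsVolterraSolution k g u) : u 0 = g 0 := by
  simpa using hu.eq_sub_integral le_rfl

theorem sub_mul_integral_mul_apply_le (hu : IsVolterraSolution k g u) (hk : IsLogConvexKernel k)
    (hg : MonotoneOn (fun t => g t / k t) (Ioi 0)) {t T : ℝ} (ht : 0 < t) (htT : t ≤ T)
    (hnonneg : ∀ s ∈ Ioo 0 t, 0 ≤ u s) (hmax : ∀ s ∈ Ioo t T, u s ≤ u t) :
    (k T - k t * ∫ x in (0 : ℝ)..T - t, k x) * u t ≤ k t * u T := by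
  have hT : 0 < T := ht.trans_le htT
  have hforce : k T * g t ≤ k t * g T := by
    have := hg ht hT htT
    rw [div_le_div_iff₀ (hk.pos ht) (hk.pos hT)] at this
    linarith
  have hfar := hk.mul_integral_comp_sub_le hu.continuousOn ht.le htT hnonneg
  have hnear := mul_le_mul_of_nonneg_left
    (hk.integral_comp_sub_mul_le hu.continuousOn ht.le htT hmax) (hk.pos ht).le
  have hsplit := intervalIntegral.integral_add_adjacent_intervals
    (hk.intervalIntegrable_mul hu.continuousOn ⟨le_rfl, hT.le⟩ ⟨ht.le, htT⟩)
    (hk.intervalIntegrable_mul hu.continuousOn ⟨ht.le, htT⟩ ⟨hT.le, le_rfl⟩)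
  have hut : k T * u t = k T * g t - k T * ∫ s in (0 : ℝ)..t, k (t - s) * u s := by
    rw [← mul_sub, ← hu.eq_sub_integral ht.le]
  rw [hu.eq_sub_integral hT.le, ← hsplit]
  linarith

theorem pos_of_forall_pos_Ico (hu : IsVolterraSolution k g u) (hk : IsLogConvexKernel k)
    (hg : MonotoneOn (fun t => g t / k t) (Ioi 0)) {T : ℝ} (hT : 0 < T)
    (hpos : ∀ t ∈ Ico 0 T, 0 < u t) : 0 < u T := by
  by_contra! huT
  obtain ⟨δ, ⟨hδ, hδT⟩, hsmall⟩ := hk.exists_forall_mul_integral_lt hT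
  have hleft : 0 < u (T - δ / 2) := hpos _ ⟨by linarith, by linarith⟩
  obtain ⟨t, ⟨hδt, ht_le⟩, hmax⟩ := isCompact_Icc.exists_isMaxOn
    (nonempty_Icc.2 (by linarith : T - δ / 2 ≤ T))
    (hu.continuousOn.mono <| Icc_subset_Ici_self.trans (Ici_subset_Ici.2 (by linarith)))
  have hut : 0 < u t := hleft.trans_le (hmax ⟨le_rfl, by linarith⟩)
  have ht : 0 < t := by linarith
  have htT : t < T := ht_le.lt_of_ne fun h => huT.not_gt (h ▸ hut)
  have hcoeff : 0 < k T - k t * ∫ x in (0 : ℝ)..T - t, k x := by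
    simpa using hsmall (T - t) ⟨sub_pos.2 htT, by linarith⟩
  have hscaled : 0 < k t * u T := (mul_pos hcoeff hut).trans_le <|
    hu.sub_mul_integral_mul_apply_le hk hg ht htT.le
      (fun s hs => (hpos s ⟨hs.1.le, hs.2.trans htT⟩).le)
      fun s hs => hmax ⟨hδt.trans hs.1.le, hs.2.le⟩
  exact huT.not_gt (pos_of_mul_pos_right hscaled (hk.pos ht).le)

theorem pos (hu : IsVolterraSolution k g u) (hk : IsLogConvexKernel k)
    (hg : MonotoneOn (fun t => g t / k t) (Ioi 0)) (h0 : 0 < u 0) {t : ℝ} (ht : 0 ≤ t) :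
    0 < u t :=
  pos_of_continuousOn_of_step hu.continuousOn
    (fun _ hT hpos => hT.eq_or_lt.elim (fun h => h ▸ h0)
      fun hT => hu.pos_of_forall_pos_Ico hk hg hT hpos) ht

theorem sub_comp_add (hu : IsVolterraSolution k g u) (hk : IsLogConvexKernel k) {h : ℝ}
    (hh : 0 ≤ h) :
    IsVolterraSolution k (fun t => g t - g (t + h) + ∫ s in (0 : ℝ)..h, k (t + h - s) * u s)
      (fun t => u t - u (t + h)) := by
  have hshift : ContinuousOn (fun t => u (t + h)) (Ici 0) :=
    hu.continuousOn.comp (by fun_prop) fun t (ht : 0 ≤ t) => add_nonneg ht hh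
  refine ⟨hu.continuousOn.sub hshift, fun {t} ht => ?_⟩
  have hth : h ≤ t + h := le_add_of_nonneg_left ht
  have hsplit := intervalIntegral.integral_add_adjacent_intervals
    (hk.intervalIntegrable_mul hu.continuousOn ⟨le_rfl, hh.trans hth⟩ ⟨hh, hth⟩)
    (hk.intervalIntegrable_mul hu.continuousOn ⟨hh, hth⟩ ⟨hh.trans hth, le_rfl⟩)
  have htranslate : ∫ s in (0 : ℝ)..t, k (t - s) * u (s + h)
      = ∫ s in h..t + h, k (t + h - s) * u s := by
    simpa using intervalIntegral.integral_comp_add_right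
      (a := 0) (b := t) (fun s => k (t + h - s) * u s) h
  simp only [mul_sub]
  rw [intervalIntegral.integral_sub
      (hk.intervalIntegrable_mul hu.continuousOn ⟨le_rfl, ht⟩ ⟨ht, le_rfl⟩)
      (hk.intervalIntegrable_mul hshift ⟨le_rfl, ht⟩ ⟨ht, le_rfl⟩),
    htranslate, hu.eq_sub_integral ht, hu.eq_sub_integral (hh.trans hth), ← hsplit]
  ring

theorem pos_of_one (hu : IsVolterraSolution k (fun _ => 1) u) (hk : IsLogConvexKernel k) {t : ℝ}
    (ht : 0 ≤ t) : 0 < u t :=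
  hu.pos hk (fun _ hx _ hy hxy => one_div_le_one_div_of_le (hk.pos hy) (hk.antitoneOn hx hy hxy))
    (hu.apply_zero ▸ one_pos) ht

theorem strictAntiOn (hu : IsVolterraSolution k (fun _ => 1) u) (hk : IsLogConvexKernel k) :
    StrictAntiOn u (Ici 0) := by
  intro s hs t _ hst
  obtain ⟨h, hh, rfl⟩ : ∃ h, 0 < h ∧ t = s + h := ⟨t - s, sub_pos.2 hst, by ring⟩
  have hdiff := hu.sub_comp_add hk hh.le
  simp only [sub_self, zero_add] at hdiff
  refine sub_pos.1 (hdiff.pos hk ?_ ?_ hs)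
  · intro x (hx : 0 < x) y (hy : 0 < y) hxy
    simp only
    rw [div_le_div_iff₀ (hk.pos hx) (hk.pos hy)]
    simp only [← intervalIntegral.integral_mul_const]
    have hint {z : ℝ} (hz : 0 < z) :=
      hk.intervalIntegrable_mul (T := z + h) (a := 0) (b := h) hu.continuousOn
        ⟨le_rfl, by linarith⟩ ⟨hh.le, by linarith⟩
    refine intervalIntegral.integral_mono_on hh.le ((hint hx).mul_const _)
      ((hint hy).mul_const _) fun r hr => ?_
    have hratio := hk.mul_add_le hx hxy (sub_nonneg.2 hr.2)
    simp only [← add_sub_assoc] at hratio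
    linarith [mul_le_mul_of_nonneg_right hratio (hu.pos_of_one hk hr.1).le]
  · rw [hdiff.apply_zero, zero_add]
    exact intervalIntegral.intervalIntegral_pos_of_pos_on
      (hk.intervalIntegrable_mul hu.continuousOn ⟨le_rfl, hh.le⟩ ⟨hh.le, le_rfl⟩)
      (fun r hr => mul_pos (hk.pos (sub_pos.2 hr.2)) (hu.pos_of_one hk hr.1.le)) hh

theorem one_add_integral_mul_le_one (hu : IsVolterraSolution k (fun _ => 1) u)
    (hk : IsLogConvexKernel k) {t : ℝ} (ht : 0 ≤ t) :
    (1 + ∫ x in (0 : ℝ)..t, k x) * u t ≤ 1 := by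
  have hmono := hk.le_integral_comp_sub_mul hu.continuousOn ht
    fun s hs => (hu.strictAntiOn hk).antitoneOn hs.1.le ht hs.2.le
  linarith [hu.eq_sub_integral ht]

end IsVolterraSolution

/-- The Riemann–Liouville kernel `x^(α-1) / Γ(α)`: convolution with it on `(0, ∞)` is fractional
integration of order `α`. Its values at negative `x` carry no meaning. -/
noncomputable def rlKernel (α x : ℝ) : ℝ :=
  x ^ (α - 1) / Real.Gamma α

section RiemannLiouville

variable {α β t : ℝ}

theorem rlKernel_one : rlKernel 1 = fun _ => 1 := by
  ext x
  simp [rlKernel]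

theorem rlKernel_nonneg (hα : 0 < α) (ht : 0 ≤ t) : 0 ≤ rlKernel α t :=
  div_nonneg (Real.rpow_nonneg ht _) (Real.Gamma_pos_of_pos hα).le

theorem intervalIntegrable_rlKernel (hα : 0 < α) (a b : ℝ) :
    IntervalIntegrable (rlKernel α) volume a b :=
  (intervalIntegral.intervalIntegrable_rpow' (by linarith)).div_const _

theorem continuous_rlKernel (hα : 1 ≤ α) : Continuous (rlKernel α) :=
  (Real.continuous_rpow_const (sub_nonneg.2 hα)).div_const _

theorem isLogConvexKernel_rlKernel (hα : 0 < α) (hα1 : α ≤ 1) : IsLogConvexKernel (rlKernel α) where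
  pos hx := div_pos (Real.rpow_pos_of_pos hx _) (Real.Gamma_pos_of_pos hα)
  antitoneOn x hx y _ hxy := div_le_div_of_nonneg_right
    (Real.rpow_le_rpow_of_nonpos hx hxy (by linarith)) (Real.Gamma_pos_of_pos hα).le
  intervalIntegrable {x} _ := intervalIntegrable_rlKernel hα 0 x
  mul_add_le {x y a} hx hxy ha := by
    have hy : 0 < y := hx.trans_le hxy
    have hbase : x * (y + a) ≤ (x + a) * y := by nlinarith
    have hrpow := Real.rpow_le_rpow_of_nonpos (z := α - 1) (by positivity) hbase (by linarith)
    rw [Real.mul_rpow (by positivity) hy.le, Real.mul_rpow hx.le (by positivity)] at hrpow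
    simp only [rlKernel, div_mul_div_comm]
    exact div_le_div_of_nonneg_right hrpow (mul_self_nonneg _)

theorem integral_rlKernel_mul_rlKernel (hα : 0 < α) (hβ : 0 < β) (ht : 0 < t) :
    ∫ s in (0 : ℝ)..t, rlKernel α (t - s) * rlKernel β s = rlKernel (α + β) t := by
  have hbeta : ∫ s in (0 : ℝ)..t, s ^ (β - 1) * (t - s) ^ (α - 1)
      = t ^ (β + α - 1) * (Real.Gamma β * Real.Gamma α / Real.Gamma (β + α)) := by
    have hscaled := Complex.betaIntegral_scaled β α ht
    rw [Complex.betaIntegral_eq_Gamma_mul_div _ _ (by simpa) (by simpa)] at hscaled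
    apply Complex.ofReal_injective
    rw [← intervalIntegral.integral_ofReal]
    push_cast [Complex.ofReal_cpow ht.le, ← Complex.Gamma_ofReal]
    rw [← hscaled]
    refine intervalIntegral.integral_congr fun s hs => ?_
    rw [uIcc_of_le ht.le] at hs
    simp [Complex.ofReal_cpow hs.1, Complex.ofReal_cpow (sub_nonneg.2 hs.2)]
  have hΓα := (Real.Gamma_pos_of_pos hα).ne'
  have hΓβ := (Real.Gamma_pos_of_pos hβ).ne'
  calc ∫ s in (0 : ℝ)..t, rlKernel α (t - s) * rlKernel β s
      = (∫ s in (0 : ℝ)..t, s ^ (β - 1) * (t - s) ^ (α - 1))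
          / (Real.Gamma β * Real.Gamma α) := by
        rw [← intervalIntegral.integral_div]
        simp only [rlKernel, div_mul_div_comm, mul_comm]
    _ = rlKernel (α + β) t := by
        rw [hbeta, rlKernel, add_comm β α]
        field_simp

theorem integral_rlKernel (hα : 0 < α) :
    ∫ x in (0 : ℝ)..t, rlKernel α x = t ^ α / Real.Gamma (α + 1) := by
  simp only [rlKernel]
  rw [intervalIntegral.integral_div, integral_rpow (Or.inl (by linarith)), sub_add_cancel,
    Real.zero_rpow hα.ne', sub_zero, div_div, Real.Gamma_add_one hα.ne']

end RiemannLiouville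

theorem exp_neg_mul_rpow_le_Gamma {R s : ℝ} (hR : 0 ≤ R) (hs : 1 ≤ s) :
    Real.exp (-R) * R ^ (s - 1) ≤ Real.Gamma s := by
  have hint := Real.GammaIntegral_convergent (zero_lt_one.trans_le hs)
  have hsub : Ioi R ⊆ Ioi 0 := Ioi_subset_Ioi hR
  calc Real.exp (-R) * R ^ (s - 1)
      = ∫ x in Ioi R, Real.exp (-x) * R ^ (s - 1) := by
        rw [integral_mul_const, integral_exp_neg_Ioi]
    _ ≤ ∫ x in Ioi R, Real.exp (-x) * x ^ (s - 1) := by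
        refine setIntegral_mono_on ((integrableOn_exp_neg_Ioi R).mul_const _)
          (hint.mono_set hsub) measurableSet_Ioi fun x hx => ?_
        exact mul_le_mul_of_nonneg_left
          (Real.rpow_le_rpow hR (le_of_lt hx) (sub_nonneg.2 hs)) (Real.exp_pos _).le
    _ ≤ ∫ x in Ioi 0, Real.exp (-x) * x ^ (s - 1) := by
        refine setIntegral_mono_set hint ?_ hsub.eventuallyLE
        filter_upwards [ae_restrict_mem measurableSet_Ioi] with x hx
        exact mul_nonneg (Real.exp_pos _).le (Real.rpow_nonneg (le_of_lt hx) _)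
    _ = Real.Gamma s := (Real.Gamma_eq_integral (zero_lt_one.trans_le hs)).symm

section MittagLeffler

variable {α : ℝ}

theorem Gamma_mul_natCast_add_one_pos (hα : 0 < α) (n : ℕ) : 0 < Real.Gamma (α * n + 1) :=
  Real.Gamma_pos_of_pos (by positivity)

theorem summable_mittagLeffler (hα : 0 < α) (x : ℝ) :
    Summable fun n : ℕ => x ^ n / Real.Gamma (α * n + 1) := by
  obtain ⟨R, hR, hRα⟩ : ∃ R : ℝ, 0 < R ∧ R ^ α = |x| + 1 :=
    ⟨(|x| + 1) ^ α⁻¹, by positivity, Real.rpow_inv_rpow (by positivity) hα.ne'⟩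
  have hgeom : Summable fun n : ℕ => Real.exp R * (|x| / R ^ α) ^ n :=
    (summable_geometric_of_lt_one (by positivity)
      ((div_lt_one (by positivity)).2 (by linarith))).mul_left _
  refine hgeom.of_norm_bounded fun n => ?_
  have hΓ : Real.exp (-R) * (R ^ α) ^ n ≤ Real.Gamma (α * n + 1) := by
    have h1 : 1 ≤ α * n + 1 := le_add_of_nonneg_left (by positivity)
    simpa [Real.rpow_mul hR.le] using exp_neg_mul_rpow_le_Gamma hR.le h1
  rw [norm_div, norm_pow, Real.norm_eq_abs,
    Real.norm_of_nonneg (Gamma_mul_natCast_add_one_pos hα n).le]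
  calc |x| ^ n / Real.Gamma (α * n + 1) ≤ |x| ^ n / (Real.exp (-R) * (R ^ α) ^ n) := by gcongr
    _ = Real.exp R * (|x| / R ^ α) ^ n := by rw [Real.exp_neg, div_pow]; field_simp

theorem continuous_mittagLeffler (hα : 0 < α) : Continuous (mittagLeffler α) := by
  refine continuous_iff_continuousAt.2 fun x => ?_
  have hball : ContinuousOn (mittagLeffler α) (Metric.closedBall 0 (|x| + 1)) := by
    refine continuousOn_tsum (fun n => by fun_prop) (summable_mittagLeffler hα (|x| + 1))
      fun n y hy => ?_
    have hΓ := Gamma_mul_natCast_add_one_pos hα n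
    rw [norm_div, norm_pow, Real.norm_of_nonneg hΓ.le]
    gcongr
    simpa using hy
  exact hball.continuousAt (Metric.closedBall_mem_nhds_of_mem (by simp))

theorem mittagLeffler_zero_right : mittagLeffler α 0 = 1 := by
  rw [mittagLeffler, tsum_eq_single 0 fun n hn => by simp [hn]]
  simp

theorem hasSum_rlKernel_mittagLeffler (hα : 0 < α) (c : ℝ) {t : ℝ} (ht : 0 ≤ t) :
    HasSum (fun n : ℕ => c ^ n * rlKernel (α * n + 1) t) (mittagLeffler α (c * t ^ α)) := by
  refine (summable_mittagLeffler hα (c * t ^ α)).hasSum.congr_fun fun n => ?_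
  rw [rlKernel, add_sub_cancel_right, Real.rpow_mul ht, Real.rpow_natCast, mul_pow, mul_div_assoc]

theorem summable_pow_mul_rlKernel_succ (hα : 0 < α) (c : ℝ) {t : ℝ} (ht : 0 ≤ t) :
    Summable fun n : ℕ => c ^ n * rlKernel (α * (n + 1 : ℕ) + 1) t := by
  obtain rfl | hc := eq_or_ne c 0
  · exact summable_of_ne_finset_zero (s := {0}) fun n hn => by simp_all
  · have htail := (summable_nat_add_iff 1).2 (hasSum_rlKernel_mittagLeffler hα c ht).summable
    simp only [pow_succ', mul_assoc] at htail
    exact (summable_mul_left_iff hc).1 htail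

theorem hasSum_integral_rlKernel_mul_mittagLeffler (hα : 0 < α) (c : ℝ) {t : ℝ} (ht : 0 < t) :
    HasSum (fun n : ℕ => c ^ n * rlKernel (α * (n + 1 : ℕ) + 1) t)
      (∫ s in (0 : ℝ)..t, rlKernel α (t - s) * mittagLeffler α (c * s ^ α)) := by
  set F : ℕ → ℝ → ℝ := fun n s => rlKernel α (t - s) * (c ^ n * rlKernel (α * n + 1) s)
  have hα_add (n : ℕ) : 0 < α * n + 1 := by positivity
  have hF_int (n : ℕ) : IntervalIntegrable (F n) volume 0 t := by
    have hleft : IntervalIntegrable (fun s => rlKernel α (t - s)) volume 0 t := by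
      simpa using (intervalIntegrable_rlKernel hα t 0).comp_sub_left t
    have hright : Continuous (rlKernel (α * n + 1)) :=
      continuous_rlKernel (le_add_of_nonneg_left (by positivity))
    exact hleft.mul_continuousOn (hright.const_mul _).continuousOn
  have hF_integral (d : ℝ) (n : ℕ) :
      ∫ s in (0 : ℝ)..t, rlKernel α (t - s) * (d ^ n * rlKernel (α * n + 1) s)
        = d ^ n * rlKernel (α * (n + 1 : ℕ) + 1) t := by
    simp only [mul_left_comm _ (d ^ n)]
    rw [intervalIntegral.integral_const_mul, integral_rlKernel_mul_rlKernel hα (hα_add n) ht]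
    push_cast
    ring_nf
  have hF_norm (n : ℕ) : ∫ s in Ioc 0 t, ‖F n s‖ = |c| ^ n * rlKernel (α * (n + 1 : ℕ) + 1) t := by
    rw [← hF_integral, intervalIntegral.integral_of_le ht.le]
    refine setIntegral_congr_fun measurableSet_Ioc fun s hs => ?_
    simp only [F, norm_mul, norm_pow, Real.norm_eq_abs,
      abs_of_nonneg (rlKernel_nonneg hα (sub_nonneg.2 hs.2)),
      abs_of_nonneg (rlKernel_nonneg (hα_add n) hs.1.le)]
  have hsum := hasSum_integral_of_summable_integral_norm
    (fun n => (intervalIntegrable_iff_integrableOn_Ioc_of_le ht.le).1 (hF_int n))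
    (by simpa only [hF_norm] using summable_pow_mul_rlKernel_succ hα |c| ht.le)
  simp only [← intervalIntegral.integral_of_le ht.le, F, hF_integral, tsum_mul_left] at hsum
  have hvalue : ∫ s in (0 : ℝ)..t, rlKernel α (t - s) * mittagLeffler α (c * s ^ α)
      = ∫ s in (0 : ℝ)..t, rlKernel α (t - s) * ∑' n : ℕ, c ^ n * rlKernel (α * n + 1) s := by
    refine intervalIntegral.integral_congr fun s hs => ?_
    rw [uIcc_of_le ht.le] at hs
    simp only [(hasSum_rlKernel_mittagLeffler hα c hs.1).tsum_eq]
  exact hvalue ▸ hsum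

theorem mittagLeffler_mul_rpow_eq (hα : 0 < α) (c : ℝ) {t : ℝ} (ht : 0 ≤ t) :
    mittagLeffler α (c * t ^ α)
      = 1 + c * ∫ s in (0 : ℝ)..t, rlKernel α (t - s) * mittagLeffler α (c * s ^ α) := by
  obtain rfl | ht := ht.eq_or_lt
  · simp [Real.zero_rpow hα.ne', mittagLeffler_zero_right]
  have htail := (hasSum_integral_rlKernel_mul_mittagLeffler hα c ht).mul_left c
  simp only [← mul_assoc, ← pow_succ'] at htail
  have hsum := htail.zero_add (f := fun n : ℕ => c ^ n * rlKernel (α * n + 1) t)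
  simpa [rlKernel_one] using (hasSum_rlKernel_mittagLeffler hα c ht.le).unique hsum

theorem isVolterraSolution_mittagLeffler (hα : 0 < α) :
    IsVolterraSolution (rlKernel α) (fun _ => 1) fun t => mittagLeffler α (-t ^ α) where
  continuousOn :=
    ((continuous_mittagLeffler hα).comp (Real.continuous_rpow_const hα.le).neg).continuousOn
  eq_sub_integral ht := by
    simpa [← sub_eq_add_neg] using mittagLeffler_mul_rpow_eq hα (-1) ht

theorem mittagLeffler_neg_le (hα : 0 < α) (hα1 : α ≤ 1) {x : ℝ} (hx : 0 ≤ x) :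
    mittagLeffler α (-x) ≤ 1 / (1 + x / Real.Gamma (α + 1)) := by
  have : 0 < Real.Gamma (α + 1) := Real.Gamma_pos_of_pos (by linarith)
  have ht : 0 ≤ x ^ α⁻¹ := Real.rpow_nonneg hx _
  have hbound := (isVolterraSolution_mittagLeffler hα).one_add_integral_mul_le_one
    (isLogConvexKernel_rlKernel hα hα1) ht
  rw [integral_rlKernel hα, Real.rpow_inv_rpow hx hα.ne'] at hbound
  exact (le_div_iff₀' (by positivity)).2 hbound

end MittagLeffler

theorem lambda_mul_mittagLeffler_bound_general {α lam t : ℝ} (hα : α ∈ Ioc (0 : ℝ) 1)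
    (hlam : 0 ≤ lam) (ht : 0 < t) :
    lam * mittagLeffler α (-lam * t ^ α) ≤ Real.Gamma (α + 1) * t ^ (-α) := by
  have hΓ : 0 < Real.Gamma (α + 1) := Real.Gamma_pos_of_pos (by linarith [hα.1])
  have htα : 0 < t ^ α := Real.rpow_pos_of_pos ht α
  calc lam * mittagLeffler α (-lam * t ^ α)
      ≤ lam * (1 / (1 + lam * t ^ α / Real.Gamma (α + 1))) := by
        rw [neg_mul]
        exact mul_le_mul_of_nonneg_left (mittagLeffler_neg_le hα.1 hα.2 (by positivity)) hlam
    _ ≤ Real.Gamma (α + 1) * t ^ (-α) := by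
        rw [Real.rpow_neg ht.le]
        field_simp
        linarith

theorem lambda_mul_mittagLeffler_bound (α : ℝ) (hα : α ∈ Set.Ioo (0:ℝ) 1) :
    ∃ C : ℝ, 0 < C ∧ ∀ lam : ℝ, 0 < lam → ∀ t : ℝ, 0 < t →
      lam * mittagLeffler α (-lam * t ^ α) ≤ C * t ^ (-α) :=
  ⟨Real.Gamma (α + 1), Real.Gamma_pos_of_pos (by linarith [hα.1]), fun _ hlam _ ht =>
    lambda_mul_mittagLeffler_bound_general ⟨hα.1, hα.2.le⟩ hlam.le ht⟩
end

section
/- Let α ∈ (0,1). There exists a constant C > 0 (depending only on α) such that for every sequence of real coefficients (c_n)_{n≥1} with Σ_{n=1}^∞ c_n² < ∞, every λ_1 > 0, every sequence of reals (λ_n)_{n≥1} with λ_n ≥ λ_1 for all n, and every t > 0, one has Σ_{n=1}^∞ c_n² λ_n E_α(−λ_n t^α)² ≤ (C² / (λ_1 t^(2α))) Σ_{n=1}^∞ c_n². -/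
/-!
Replace `E_a` by a discrete analogue: the coefficients `u_n` of
`(1 - X)⁻¹ / (1 - z (1 - X) ^ (-a))`. Expanding the geometric series,
`u_n = ∑_k z ^ k A_n(1 + a k)`, where `A_n(b)` is the `n`-th coefficient of `(1 - X) ^ (-b)`. Since
`A_n(1 + y) / n ^ y` decreases to `1 / Γ(y + 1)` by Euler's product, choosing `z = x / n ^ a` gives
`u_n → E_a(x)` by dominated convergence.

For `z ≤ 0` and `0 ≤ a ≤ 1` the nonconstant coefficients of `(1 - X) ^ a - z` are nonpositive, so
its inverse has nonnegative coefficients, and `u` is nonnegative and antitone. Then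
`1 = u_n - z ∑ A_i(a) u_{n-i}` is at least `u_n (1 - z ∑ A_i(a)) = u_n (1 - z A_n(1 + a))`. At
`z = -x / n ^ a` the limit `n → ∞` reads `E_a(-x) (1 + x / Γ(a + 1)) ≤ 1`, and therefore
`0 ≤ x E_a(-x) ≤ Γ(a + 1)`.
-/

open Filter Finset PowerSeries Topology

section PowerSeriesInverse

theorem coeff_inv_nonneg_of_coeff_nonpos {K : Type*} [Field K] [LinearOrder K]
    [IsStrictOrderedRing K] {f : K⟦X⟧} (hf₀ : 0 ≤ constantCoeff f)
    (hf : ∀ n ≠ 0, coeff n f ≤ 0) (n : ℕ) : 0 ≤ coeff n f⁻¹ := by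
  induction n using Nat.strong_induction_on with
  | _ n ih =>
    rw [coeff_inv]
    split_ifs with hn
    · exact inv_nonneg.2 hf₀
    · refine mul_nonneg_of_nonpos_of_nonpos (neg_nonpos.2 (inv_nonneg.2 hf₀))
        (sum_nonpos fun p hp ↦ ?_)
      split_ifs with hlt
      · have hsum := mem_antidiagonal.1 hp
        exact mul_nonpos_of_nonpos_of_nonneg (hf _ (by lia)) (ih _ hlt)
      · exact le_rfl

open scoped PowerSeries.WithPiTopology

variable {𝕜 : Type*} [NormedField 𝕜]

theorem summable_choose_mul_pow_sub {r : 𝕜} (hr : ‖r‖ < 1) (j : ℕ) :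
    Summable fun k : ℕ ↦ (k.choose j : 𝕜) * r ^ (k - j) :=
  (summable_nat_add_iff j).1 <| by
    simpa only [add_tsub_cancel_right] using summable_choose_mul_geometric_of_norm_lt_one j hr

theorem summable_pow_of_norm_constantCoeff_lt_one {f : 𝕜⟦X⟧} (hf : ‖constantCoeff f‖ < 1) :
    Summable fun k : ℕ ↦ f ^ k := by
  refine (WithPiTopology.summable_iff_summable_coeff 𝕜).2 fun n ↦ ?_
  obtain ⟨g, hg⟩ : ∃ g : 𝕜⟦X⟧, f = X * g + C (constantCoeff f) := ⟨_, eq_X_mul_shift_add_const f⟩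
  set r := constantCoeff f
  have coeff_pow_eq (k : ℕ) : coeff n (f ^ k) =
      ∑ j ∈ range (n + 1), coeff n ((X * g) ^ j) * ((k.choose j : 𝕜) * r ^ (k - j)) := by
    have hterm (j : ℕ) : coeff n ((X * g) ^ j * C r ^ (k - j) * (k.choose j : 𝕜⟦X⟧)) =
        coeff n ((X * g) ^ j) * ((k.choose j : 𝕜) * r ^ (k - j)) := by
      rw [← map_pow, ← map_natCast (C (R := 𝕜)), mul_assoc, ← map_mul, coeff_mul_C,
        mul_comm (r ^ _)]
    rw [hg, add_pow, map_sum]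
    simp only [hterm]
    -- Both sums reduce to the range `j ≤ min n k`: `X ^ j` kills the terms with `n < j`.
    refine sum_congr_of_eq_on_inter ?_ ?_ fun _ _ _ ↦ rfl
    · intro j _ hj
      rw [mul_pow, coeff_X_pow_mul', if_neg (by simpa using hj), zero_mul]
    · intro j _ hj
      rw [Nat.choose_eq_zero_of_lt (by simpa using hj), Nat.cast_zero, zero_mul, mul_zero]
  simp only [coeff_pow_eq]
  exact summable_sum fun j _ ↦ (summable_choose_mul_pow_sub hf j).mul_left _

theorem hasSum_coeff_mul_pow {f : 𝕜⟦X⟧} (hf : ‖constantCoeff f‖ < 1) (g : 𝕜⟦X⟧) (n : ℕ) :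
    HasSum (fun k : ℕ ↦ coeff n (g * f ^ k)) (coeff n (g * (1 - f)⁻¹)) := by
  have hsum := summable_pow_of_norm_constantCoeff_lt_one hf
  have hne : constantCoeff (1 - f) ≠ 0 := by
    rw [map_sub, map_one, sub_ne_zero]
    intro h
    simp [← h] at hf
  have htsum : ∑' k, f ^ k = (1 - f)⁻¹ :=
    (PowerSeries.eq_inv_iff_mul_eq_one hne).2 hsum.tsum_pow_mul_one_sub
  exact (WithPiTopology.hasSum_iff_hasSum_coeff 𝕜).1 (htsum ▸ hsum.hasSum.mul_left g) n

end PowerSeriesInverse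

section NegBinomialSeries

variable {R : Type*} [CommRing R] [BinomialRing R]

/-- The formal binomial series `(1 - X) ^ (-b)`. -/
def negBinomialSeries (b : R) : R⟦X⟧ :=
  .mk (Ring.multichoose b)

@[simp]
theorem coeff_negBinomialSeries (b : R) (n : ℕ) :
    coeff n (negBinomialSeries b) = Ring.multichoose b n :=
  coeff_mk _ _

@[simp]
theorem constantCoeff_negBinomialSeries (b : R) : constantCoeff (negBinomialSeries b) = 1 := by
  rw [← coeff_zero_eq_constantCoeff_apply, coeff_negBinomialSeries, Ring.multichoose_zero_right]

theorem negBinomialSeries_eq_rescale (b : R) :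
    negBinomialSeries b = rescale (-1) (binomialSeries R (-b)) := by
  ext n
  rw [coeff_negBinomialSeries, coeff_rescale, binomialSeries_coeff, Ring.choose_neg',
    Units.smul_def, smul_eq_mul, mul_one, zsmul_eq_mul, ← mul_assoc, Int.cast_negOnePow_natCast,
    ← mul_pow, neg_one_mul, neg_neg, one_pow, one_mul]

theorem negBinomialSeries_add (b c : R) :
    negBinomialSeries (b + c) = negBinomialSeries b * negBinomialSeries c := by
  simp only [negBinomialSeries_eq_rescale, neg_add, binomialSeries_add, map_mul]

theorem negBinomialSeries_zero : negBinomialSeries (0 : R) = 1 := by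
  rw [negBinomialSeries_eq_rescale, neg_zero, binomialSeries_zero, map_one]

theorem negBinomialSeries_mul_natCast (b : R) (k : ℕ) :
    negBinomialSeries (b * k) = negBinomialSeries b ^ k := by
  induction k with
  | zero => rw [Nat.cast_zero, mul_zero, negBinomialSeries_zero, pow_zero]
  | succ k ih => rw [Nat.cast_succ, mul_add_one, negBinomialSeries_add, ih, pow_succ]

theorem one_sub_X_mul_negBinomialSeries_one : (1 - X) * negBinomialSeries (1 : R) = 1 := by
  have hcoeff : Ring.multichoose (1 : R) = 1 := funext Ring.multichoose_one
  rw [negBinomialSeries, hcoeff, mul_comm]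
  exact mk_one_mul_one_sub_eq_one R

end NegBinomialSeries

section Multichoose

variable {K : Type*} [Field K]

theorem multichoose_eq_prod_div_factorial [CharZero K] (b : K) (n : ℕ) :
    Ring.multichoose b n = (∏ j ∈ range n, (b + j)) / n.factorial := by
  rw [eq_div_iff (Nat.cast_ne_zero.2 n.factorial_ne_zero), mul_comm, ← nsmul_eq_mul,
    Ring.factorial_nsmul_multichoose_eq_ascPochhammer, Polynomial.ascPochhammer_smeval_eq_eval]
  induction n with
  | zero => simp
  | succ n ih => rw [ascPochhammer_succ_eval, prod_range_succ, ih]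

theorem multichoose_succ [CharZero K] (b : K) (n : ℕ) :
    Ring.multichoose b (n + 1) = Ring.multichoose b n * ((b + n) / (n + 1)) := by
  rw [multichoose_eq_prod_div_factorial, multichoose_eq_prod_div_factorial, prod_range_succ,
    Nat.factorial_succ, Nat.cast_mul, Nat.cast_succ, mul_comm (n + 1 : K), mul_div_mul_comm]

variable [LinearOrder K] [IsStrictOrderedRing K]

theorem multichoose_nonneg {b : K} (hb : 0 ≤ b) (n : ℕ) : 0 ≤ Ring.multichoose b n := by
  rw [multichoose_eq_prod_div_factorial]
  positivity

theorem multichoose_neg_nonpos {a : K} (ha₀ : 0 ≤ a) (ha₁ : a ≤ 1) {n : ℕ} (hn : n ≠ 0) :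
    Ring.multichoose (-a) n ≤ 0 := by
  obtain ⟨n, rfl⟩ := Nat.exists_eq_add_one_of_ne_zero hn
  clear hn
  induction n with
  | zero => simpa only [zero_add, Ring.multichoose_one_right, neg_nonpos]
  | succ n ih =>
    have hfactor : 0 ≤ -a + (n + 1 : ℕ) := by
      push_cast
      linarith [n.cast_nonneg (α := K)]
    rw [multichoose_succ]
    exact mul_nonpos_of_nonpos_of_nonneg ih (by positivity)

end Multichoose

section DiscreteMittagLeffler

variable {K : Type*} [Field K] [CharZero K]

/-- The generating function `(1 - X)⁻¹ / (1 - z (1 - X) ^ (-a))` of the Grünwald–Letnikov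
discretisation of the fractional relaxation equation `D^a u = z u`, `u 0 = 1`. Its `n`-th
coefficient at `z = x / n ^ a` approximates `E_a(x)`. -/
noncomputable def discreteMittagLeffler (a z : K) : K⟦X⟧ :=
  negBinomialSeries 1 * (1 - C z * negBinomialSeries a)⁻¹

theorem one_sub_C_mul_negBinomialSeries_inv (a : K) {z : K} (hz : z ≠ 1) :
    (1 - C z * negBinomialSeries a)⁻¹ =
      negBinomialSeries (-a) * (negBinomialSeries (-a) - C z)⁻¹ := by
  have hz' : 1 - z ≠ 0 := sub_ne_zero.2 hz.symm
  have hinv := PowerSeries.mul_inv_cancel (negBinomialSeries (-a) - C z) (by simpa)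
  have hcancel : negBinomialSeries (-a) * negBinomialSeries a = 1 := by
    rw [← negBinomialSeries_add, neg_add_cancel, negBinomialSeries_zero]
  rw [inv_eq_iff_mul_eq_one (by simpa)]
  linear_combination hinv - C z * (negBinomialSeries (-a) - C z)⁻¹ * hcancel

theorem discreteMittagLeffler_eq_mul_inv (a : K) {z : K} (hz : z ≠ 1) :
    discreteMittagLeffler a z =
      negBinomialSeries (1 - a) * (negBinomialSeries (-a) - C z)⁻¹ := by
  rw [discreteMittagLeffler, one_sub_C_mul_negBinomialSeries_inv a hz, ← mul_assoc,
    ← negBinomialSeries_add, ← sub_eq_add_neg]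

theorem one_sub_X_mul_discreteMittagLeffler (a : K) {z : K} (hz : z ≠ 1) :
    (1 - X) * discreteMittagLeffler a z = 1 + C z * (negBinomialSeries (-a) - C z)⁻¹ := by
  have hz' : 1 - z ≠ 0 := sub_ne_zero.2 hz.symm
  have hinv := PowerSeries.mul_inv_cancel (negBinomialSeries (-a) - C z) (by simpa)
  rw [discreteMittagLeffler, ← mul_assoc, one_sub_X_mul_negBinomialSeries_one, one_mul,
    one_sub_C_mul_negBinomialSeries_inv a hz]
  linear_combination hinv

theorem discreteMittagLeffler_eq_add (a : K) {z : K} (hz : z ≠ 1) :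
    discreteMittagLeffler a z =
      negBinomialSeries 1 + C z * (negBinomialSeries a * discreteMittagLeffler a z) := by
  have hz' : 1 - z ≠ 0 := sub_ne_zero.2 hz.symm
  have hinv := PowerSeries.mul_inv_cancel (1 - C z * negBinomialSeries a) (by simpa)
  rw [discreteMittagLeffler]
  linear_combination negBinomialSeries 1 * hinv

variable [LinearOrder K] [IsStrictOrderedRing K]

theorem coeff_negBinomialSeries_neg_sub_C_inv_nonneg {a z : K} (ha₀ : 0 ≤ a) (ha₁ : a ≤ 1)
    (hz : z ≤ 0) (n : ℕ) : 0 ≤ coeff n (negBinomialSeries (-a) - C z)⁻¹ := by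
  refine coeff_inv_nonneg_of_coeff_nonpos ?_ (fun m hm ↦ ?_) n
  · rw [map_sub, constantCoeff_negBinomialSeries, constantCoeff_C]
    linarith
  · rw [map_sub, coeff_negBinomialSeries, coeff_C_of_ne_zero hm, sub_zero]
    exact multichoose_neg_nonpos ha₀ ha₁ hm

theorem coeff_discreteMittagLeffler_nonneg {a z : K} (ha₀ : 0 ≤ a) (ha₁ : a ≤ 1) (hz : z ≤ 0)
    (n : ℕ) : 0 ≤ coeff n (discreteMittagLeffler a z) := by
  rw [discreteMittagLeffler_eq_mul_inv a (hz.trans_lt one_pos).ne, coeff_mul]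
  refine sum_nonneg fun p _ ↦ mul_nonneg ?_ ?_
  · rw [coeff_negBinomialSeries]
    exact multichoose_nonneg (sub_nonneg.2 ha₁) _
  · exact coeff_negBinomialSeries_neg_sub_C_inv_nonneg ha₀ ha₁ hz _

theorem antitone_coeff_discreteMittagLeffler {a z : K} (ha₀ : 0 ≤ a) (ha₁ : a ≤ 1) (hz : z ≤ 0) :
    Antitone fun n ↦ coeff n (discreteMittagLeffler a z) := by
  refine antitone_nat_of_succ_le fun n ↦ ?_
  have hdiff := congrArg (coeff (n + 1))
    (one_sub_X_mul_discreteMittagLeffler a (hz.trans_lt one_pos).ne)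
  rw [sub_mul, one_mul, map_sub, coeff_succ_X_mul, map_add, coeff_C_mul, coeff_one,
    if_neg n.succ_ne_zero, zero_add] at hdiff
  rw [← sub_nonpos, hdiff]
  exact mul_nonpos_of_nonpos_of_nonneg hz
    (coeff_negBinomialSeries_neg_sub_C_inv_nonneg ha₀ ha₁ hz _)

theorem coeff_discreteMittagLeffler_mul_le_one {a z : K} (ha₀ : 0 ≤ a) (ha₁ : a ≤ 1) (hz : z ≤ 0)
    (n : ℕ) :
    coeff n (discreteMittagLeffler a z) * (1 - z * Ring.multichoose (1 + a) n) ≤ 1 := by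
  set u := discreteMittagLeffler a z with hu
  have hrec : coeff n u = 1 + z * coeff n (negBinomialSeries a * u) := by
    conv_lhs => rw [hu, discreteMittagLeffler_eq_add a (hz.trans_lt one_pos).ne]
    rw [map_add, coeff_C_mul, coeff_negBinomialSeries, Ring.multichoose_one]
  have hconv : Ring.multichoose (1 + a) n * coeff n u ≤ coeff n (negBinomialSeries a * u) := by
    rw [add_comm, ← coeff_negBinomialSeries, negBinomialSeries_add, coeff_mul, coeff_mul, sum_mul]
    refine sum_le_sum fun p hp ↦ ?_
    simp only [coeff_negBinomialSeries, Ring.multichoose_one, mul_one]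
    exact mul_le_mul_of_nonneg_left
      (antitone_coeff_discreteMittagLeffler ha₀ ha₁ hz (HasAntidiagonal.antidiagonal.snd_le hp))
      (multichoose_nonneg ha₀ _)
  linarith [mul_le_mul_of_nonpos_left hconv hz]

end DiscreteMittagLeffler

section Limit

theorem hasSum_coeff_discreteMittagLeffler {𝕜 : Type*} [NormedField 𝕜] [CharZero 𝕜] (a : 𝕜)
    {z : 𝕜} (hz : ‖z‖ < 1) (n : ℕ) :
    HasSum (fun k : ℕ ↦ z ^ k * Ring.multichoose (1 + a * k) n)
      (coeff n (discreteMittagLeffler a z)) := by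
  have hf : ‖constantCoeff (C z * negBinomialSeries a)‖ < 1 := by simpa
  refine (hasSum_coeff_mul_pow hf (negBinomialSeries 1) n).congr_fun fun k ↦ ?_
  rw [mul_pow, ← negBinomialSeries_mul_natCast, mul_left_comm, ← negBinomialSeries_add, ← map_pow,
    coeff_C_mul, coeff_negBinomialSeries]

theorem tendsto_multichoose_one_add_div_rpow {y : ℝ} (hy : 0 < y + 1) :
    Tendsto (fun n : ℕ ↦ Ring.multichoose (1 + y) n / (n : ℝ) ^ y) atTop
      (𝓝 (1 / Real.Gamma (y + 1))) := by
  refine ((tendsto_natCast_div_add_atTop (1 + y)).div (Real.GammaSeq_tendsto_Gamma (y + 1))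
    (Real.Gamma_pos_of_pos hy).ne').congr' ?_
  filter_upwards [eventually_ne_atTop 0] with n hn
  have hn' : (0 : ℝ) < n := by positivity
  rw [multichoose_eq_prod_div_factorial, Pi.div_apply, Real.GammaSeq, prod_range_succ,
    Real.rpow_add_one hn'.ne', add_comm y 1, add_comm (n : ℝ) (1 + y)]
  have hlast : 1 + y + n ≠ 0 := (by linarith : 0 < 1 + y + n).ne'
  field_simp

theorem one_add_div_add_one_le_rpow {x y : ℝ} (hx : 0 < x) (hy : 0 ≤ y) :
    1 + y / (x + 1) ≤ ((x + 1) / x) ^ y := by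
  have hlog : 1 / (x + 1) ≤ Real.log ((x + 1) / x) :=
    calc 1 / (x + 1) = 1 - ((x + 1) / x)⁻¹ := by field_simp; ring
      _ ≤ Real.log ((x + 1) / x) := Real.one_sub_inv_le_log_of_pos (by positivity)
  calc 1 + y / (x + 1) = 1 / (x + 1) * y + 1 := by ring
    _ ≤ Real.log ((x + 1) / x) * y + 1 := by gcongr
    _ ≤ Real.exp (Real.log ((x + 1) / x) * y) := Real.add_one_le_exp _
    _ = ((x + 1) / x) ^ y := (Real.rpow_def_of_pos (by positivity) y).symm

theorem antitoneOn_multichoose_one_add_div_rpow {y : ℝ} (hy : 0 ≤ y) :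
    AntitoneOn (fun n : ℕ ↦ Ring.multichoose (1 + y) n / (n : ℝ) ^ y) (Set.Ici 1) := by
  refine antitoneOn_nat_Ici_of_succ_le fun n hn ↦ ?_
  have hn' : (0 : ℝ) < n := by positivity
  have hA : 0 ≤ Ring.multichoose (1 + y) n := multichoose_nonneg (by positivity) n
  have hfactor : (1 + y + n) / (n + 1) ≤ (n + 1 : ℝ) ^ y / (n : ℝ) ^ y :=
    calc (1 + y + n) / (n + 1) = 1 + y / (n + 1) := by field_simp; ring
      _ ≤ ((n + 1) / n : ℝ) ^ y := one_add_div_add_one_le_rpow hn' hy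
      _ = (n + 1 : ℝ) ^ y / (n : ℝ) ^ y := Real.div_rpow (by positivity) hn'.le y
  rw [multichoose_succ, Nat.cast_succ, div_le_iff₀ (by positivity)]
  calc Ring.multichoose (1 + y) n * ((1 + y + n) / (n + 1))
      ≤ Ring.multichoose (1 + y) n * ((n + 1 : ℝ) ^ y / (n : ℝ) ^ y) := by gcongr
    _ = Ring.multichoose (1 + y) n / (n : ℝ) ^ y * (n + 1 : ℝ) ^ y := by ring

theorem eventually_abs_div_natCast_rpow_lt_one {a : ℝ} (ha : 0 < a) (x : ℝ) :
    ∀ᶠ n : ℕ in atTop, |x / (n : ℝ) ^ a| < 1 := by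
  have hlim : Tendsto (fun n : ℕ ↦ x / (n : ℝ) ^ a) atTop (𝓝 0) :=
    ((tendsto_rpow_atTop ha).comp tendsto_natCast_atTop_atTop).const_div_atTop x
  exact hlim.abs.eventually_lt_const (by simp)

theorem tendsto_coeff_discreteMittagLeffler {a : ℝ} (ha : 0 < a) (x : ℝ) :
    Tendsto (fun n : ℕ ↦ coeff n (discreteMittagLeffler a (x / (n : ℝ) ^ a))) atTop
      (𝓝 (mittagLeffler a x)) := by
  have hscale (y : ℝ) (k n : ℕ) : (y / (n : ℝ) ^ a) ^ k * Ring.multichoose (1 + a * k) n =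
      y ^ k * (Ring.multichoose (1 + a * k) n / (n : ℝ) ^ (a * k)) := by
    rw [div_pow, Real.rpow_mul (by positivity), Real.rpow_natCast]
    ring
  obtain ⟨N, hN, hN₁⟩ :=
    ((eventually_abs_div_natCast_rpow_lt_one ha |x|).and (eventually_ge_atTop 1)).exists
  have htsum : Tendsto
      (fun n : ℕ ↦ ∑' k : ℕ, (x / (n : ℝ) ^ a) ^ k * Ring.multichoose (1 + a * k) n) atTop
      (𝓝 (mittagLeffler a x)) := by
    refine tendsto_tsum_of_dominated_convergence
      (hasSum_coeff_discreteMittagLeffler a hN N).summable (fun k ↦ ?_) ?_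
    · simp only [hscale]
      rw [div_eq_mul_one_div]
      exact (tendsto_multichoose_one_add_div_rpow (by positivity)).const_mul _
    · filter_upwards [eventually_ge_atTop N] with n hn k
      have hratio : 0 ≤ Ring.multichoose (1 + a * k) n / (n : ℝ) ^ (a * k) :=
        div_nonneg (multichoose_nonneg (by positivity) n) (by positivity)
      rw [hscale, hscale, norm_mul, norm_pow, Real.norm_eq_abs, Real.norm_of_nonneg hratio]
      exact mul_le_mul_of_nonneg_left (antitoneOn_multichoose_one_add_div_rpow (by positivity)
        hN₁ (hN₁.trans hn) hn) (by positivity)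
  refine htsum.congr' ?_
  filter_upwards [eventually_abs_div_natCast_rpow_lt_one ha x] with n hn
  exact (hasSum_coeff_discreteMittagLeffler a hn n).tsum_eq

end Limit

section Bounds

variable {α x : ℝ}

theorem mittagLeffler_neg_nonneg (hα₀ : 0 < α) (hα₁ : α ≤ 1) (hx : 0 ≤ x) :
    0 ≤ mittagLeffler α (-x) := by
  refine ge_of_tendsto' (tendsto_coeff_discreteMittagLeffler hα₀ (-x)) fun n ↦ ?_
  exact coeff_discreteMittagLeffler_nonneg hα₀.le hα₁
    (div_nonpos_of_nonpos_of_nonneg (neg_nonpos.2 hx) (by positivity)) n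

theorem mittagLeffler_neg_le_inv (hα₀ : 0 < α) (hα₁ : α ≤ 1) (hx : 0 ≤ x) :
    mittagLeffler α (-x) ≤ (1 + x / Real.Gamma (α + 1))⁻¹ := by
  rw [← one_div, le_div_iff₀ (by positivity)]
  have hlim := (tendsto_coeff_discreteMittagLeffler hα₀ (-x)).mul
    (((tendsto_multichoose_one_add_div_rpow (by positivity)).const_mul x).const_add 1)
  rw [mul_one_div] at hlim
  refine le_of_tendsto' hlim fun n ↦ ?_
  convert coeff_discreteMittagLeffler_mul_le_one hα₀.le hα₁
    (div_nonpos_of_nonpos_of_nonneg (neg_nonpos.2 hx) (by positivity : 0 ≤ (n : ℝ) ^ α)) n using 2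
  ring

theorem mul_mittagLeffler_neg_le_Gamma (hα₀ : 0 < α) (hα₁ : α ≤ 1) (hx : 0 ≤ x) :
    x * mittagLeffler α (-x) ≤ Real.Gamma (α + 1) := by
  have hΓ : 0 < Real.Gamma (α + 1) := Real.Gamma_pos_of_pos (by positivity)
  calc x * mittagLeffler α (-x) ≤ x * (1 + x / Real.Gamma (α + 1))⁻¹ := by
        gcongr; exact mittagLeffler_neg_le_inv hα₀ hα₁ hx
    _ ≤ Real.Gamma (α + 1) := by
        rw [← div_eq_mul_inv, div_le_iff₀ (by positivity), mul_one_add, mul_div_cancel₀ _ hΓ.ne']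
        linarith

theorem mul_mittagLeffler_neg_mul_rpow_sq_le (hα₀ : 0 < α) (hα₁ : α ≤ 1) {lam lam1 t : ℝ}
    (hlam1 : 0 < lam1) (hlam : lam1 ≤ lam) (ht : 0 < t) :
    lam * mittagLeffler α (-lam * t ^ α) ^ 2 ≤
      Real.Gamma (α + 1) ^ 2 / (lam1 * t ^ (2 * α)) := by
  have hlam0 : 0 < lam := hlam1.trans_le hlam
  have hx : 0 ≤ lam * t ^ α := by positivity
  have hE := mittagLeffler_neg_nonneg hα₀ hα₁ hx
  rw [neg_mul, le_div_iff₀ (by positivity), mul_comm 2 α, Real.rpow_mul ht.le, Real.rpow_two]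
  calc lam * mittagLeffler α (-(lam * t ^ α)) ^ 2 * (lam1 * (t ^ α) ^ 2)
      ≤ lam * mittagLeffler α (-(lam * t ^ α)) ^ 2 * (lam * (t ^ α) ^ 2) := by gcongr
    _ = (lam * t ^ α * mittagLeffler α (-(lam * t ^ α))) ^ 2 := by ring
    _ ≤ Real.Gamma (α + 1) ^ 2 := by
        gcongr; exact mul_mittagLeffler_neg_le_Gamma hα₀ hα₁ hx

end Bounds

theorem series_bound_lambda_general {ι : Type*} {α : ℝ} (hα₀ : 0 < α) (hα₁ : α ≤ 1)
    {c lam : ι → ℝ} {lam1 t : ℝ} (hc : Summable fun n ↦ c n ^ 2) (hlam1 : 0 < lam1)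
    (hlam : ∀ n, lam1 ≤ lam n) (ht : 0 < t) :
    Summable (fun n ↦ c n ^ 2 * lam n * mittagLeffler α (-(lam n) * t ^ α) ^ 2) ∧
      ∑' n, c n ^ 2 * lam n * mittagLeffler α (-(lam n) * t ^ α) ^ 2 ≤
        Real.Gamma (α + 1) ^ 2 / (lam1 * t ^ (2 * α)) * ∑' n, c n ^ 2 := by
  set B := Real.Gamma (α + 1) ^ 2 / (lam1 * t ^ (2 * α))
  have hterm (n : ι) : c n ^ 2 * lam n * mittagLeffler α (-(lam n) * t ^ α) ^ 2 ≤ B * c n ^ 2 := by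
    rw [mul_assoc, mul_comm B]
    gcongr
    exact mul_mittagLeffler_neg_mul_rpow_sq_le hα₀ hα₁ hlam1 (hlam n) ht
  have hnonneg (n : ι) : 0 ≤ c n ^ 2 * lam n * mittagLeffler α (-(lam n) * t ^ α) ^ 2 := by
    have hpos : 0 < lam n := hlam1.trans_le (hlam n)
    positivity
  have hbound : Summable fun n ↦ B * c n ^ 2 := hc.mul_left B
  have hsum := hbound.of_nonneg_of_le hnonneg hterm
  exact ⟨hsum, (hsum.tsum_le_tsum hterm hbound).trans_eq tsum_mul_left⟩

theorem series_bound_lambda (α : ℝ) (hα : α ∈ Set.Ioo (0:ℝ) 1) :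
    ∃ C : ℝ, 0 < C ∧ ∀ (c lam : ℕ → ℝ) (lam1 : ℝ), Summable (fun n => (c n) ^ 2) →
      0 < lam1 → (∀ n, lam1 ≤ lam n) → ∀ t : ℝ, 0 < t →
      Summable (fun n => (c n) ^ 2 * lam n *
        (mittagLeffler α (-(lam n) * t ^ α)) ^ 2) ∧
      ∑' n, (c n) ^ 2 * lam n * (mittagLeffler α (-(lam n) * t ^ α)) ^ 2 ≤
        (C ^ 2 / (lam1 * t ^ (2 * α))) * ∑' n, (c n) ^ 2 :=
  ⟨Real.Gamma (α + 1), Real.Gamma_pos_of_pos (by linarith [hα.1]),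
    fun _ _ _ hc hlam1 hlam _ ht ↦ series_bound_lambda_general hα.1 hα.2.le hc hlam1 hlam ht⟩
end
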